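/- Let A, A' be objects of A. Then any morphism f : A → A' in K^b(A)/𝔻 can be presented as a composition g ∘ s⁻¹ ∘ i, where A'' and T are objects of A, g ∈ A(A'', A'), s ∈ A(A'', A ⊕ T) with Cone(s) an object of 𝔻, and i : A → A ⊕ T is the canonical coretraction. -/

import Mathlib

open CategoryTheory Limits Pretriangulated ZeroObject

universe v u v' u'

section TriangulatedPrelude

variable {C : Type u} [Category.{v} C] [HasZeroObject C] [HasShift C ℤ] [Preadditive C]
  [∀ n : ℤ, (shiftFunctor C n).Additive] [Pretriangulated C]

/-- The objects of the smallest strict full triangulated subcategory of `C`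
containing the set of objects `B`. -/
inductive genSub (B : Set C) : C → Prop
  | of (X : C) (hX : X ∈ B) : genSub B X
  | zero (X : C) (hX : IsZero X) : genSub B X
  | shift (X : C) (n : ℤ) (hX : genSub B X) : genSub B (X⟦n⟧)
  | ext₂ (T : Triangle C) (hT : T ∈ distTriang C) (h₁ : genSub B T.obj₁)
      (h₃ : genSub B T.obj₃) : genSub B T.obj₂

/-- The triangulated subcategory of `C` generated by `B`. -/
def genSubcat (B : Set C) : ObjectProperty C :=
  genSub B

instance (B : Set C) : (genSubcat B).IsTriangulated where
  exists_zero := ⟨0, isZero_zero _, genSub.zero _ (isZero_zero _)⟩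
  isStableUnderShiftBy n := ⟨fun X h => genSub.shift X n h⟩
  ext₂' T hT h₁ h₃ := ObjectProperty.le_isoClosure _ _ (genSub.ext₂ T hT h₁ h₃)

/-- The extension-closure of a class of objects `E`: the smallest class containing `E`
and `0` and such that for any distinguished triangle `X ⟶ Y ⟶ Z` with `X, Z` in the
class, `Y` is also in the class. -/
inductive extClosure (E : Set C) : C → Prop
  | of (X : C) (hX : X ∈ E) : extClosure E X
  | zero (X : C) (hX : IsZero X) : extClosure E X
  | ext₂ (T : Triangle C) (hT : T ∈ distTriang C) (h₁ : extClosure E T.obj₁)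
      (h₃ : extClosure E T.obj₃) : extClosure E T.obj₂

/-- `D_{[i,j]}`: the extension-closure of `∪_{i ≤ l ≤ j} D[l]`. -/
def shiftClosure (D : Set C) (i j : ℤ) : Set C :=
  extClosure {X | ∃ (Y : C) (l : ℤ), i ≤ l ∧ l ≤ j ∧ Y ∈ D ∧ X = Y⟦l⟧}

/-- `D_{≥ i} = ∪_{k ≥ i} D_{[i,k]}`. -/
def shiftClosureGE (D : Set C) (i : ℤ) : Set C := {X | ∃ k, i ≤ k ∧ X ∈ shiftClosure D i k}

/-- `D_{≤ j} = ∪_{k ≤ j} D_{[k,j]}`. -/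
def shiftClosureLE (D : Set C) (j : ℤ) : Set C := {X | ∃ k, k ≤ j ∧ X ∈ shiftClosure D k j}

/-- A set of objects `D` is weakly negative if `0 ∈ D` and `Hom(X, Y[i]) = 0`
for all `X, Y ∈ D` and all `i ≥ 2`. -/
def WeaklyNegative (D : Set C) : Prop :=
  (0 : C) ∈ D ∧ ∀ X ∈ D, ∀ Y ∈ D, ∀ i : ℤ, 2 ≤ i → ∀ f : X ⟶ (Y⟦i⟧), f = 0

end TriangulatedPrelude

attribute [local instance] Limits.hasBinaryBiproducts_of_finite_biproducts

section KPrelude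

variable {A : Type u} [Category.{v} A] [Preadditive A] [HasZeroObject A] [HasFiniteBiproducts A]

/-- The two-term cochain complex with `P` in degree `n` and `Q` in degree `n + 1`,
with differential given by `f : P ⟶ Q` (and all other terms `0`).
In particular, `twoComplex (-1) f` is the cone of a morphism `f` of `A`. -/
noncomputable def twoComplex (n : ℤ) {P Q : A} (f : P ⟶ Q) : CochainComplex A ℤ where
  X i := if i = n then P else if i = n + 1 then Q else 0
  d i j :=
    if hij : i = n ∧ j = n + 1 then
      eqToHom (by simp [hij.1]) ≫ f ≫
        eqToHom (by simp [hij.2, show ¬ ((n : ℤ) + 1 = n) by omega])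
    else 0
  shape i j hij := by
    rw [dif_neg]
    rintro ⟨rfl, rfl⟩
    exact hij rfl
  d_comp_d' i j k _ _ := by
    by_cases h1 : i = n ∧ j = n + 1
    · by_cases h2 : j = n ∧ k = n + 1
      · obtain ⟨h1a, h1b⟩ := h1; obtain ⟨h2a, h2b⟩ := h2; omega
      · rw [dif_neg h2, comp_zero]
    · rw [dif_neg h1, zero_comp]

/-- The chain map from the two-term complex (in degrees `n`, `n + 1`) determined by
`f : P ⟶ Q` to the complex concentrated in degree `n` with value `M`, whose degree `n`
component is `g : P ⟶ M`. -/
noncomputable def twoComplexToSingle (n : ℤ) {P Q M : A} (f : P ⟶ Q) (g : P ⟶ M) :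
    twoComplex n f ⟶ (HomologicalComplex.single A (ComplexShape.up ℤ) n).obj M where
  f i :=
    if h : i = n then
      eqToHom (by simp [twoComplex, h]) ≫ g ≫
        (HomologicalComplex.singleObjXSelf (ComplexShape.up ℤ) n M).inv ≫ eqToHom (by rw [h])
    else 0
  comm' i j hij := by
    simp only [ComplexShape.up_Rel] at hij
    by_cases hj : j = n
    · have hi : ¬ (i = n ∧ j = n + 1) := by rintro ⟨rfl, rfl⟩; omega
      have hd : (twoComplex n f).d i j = 0 := by
        exact dif_neg hi
      rw [hd, zero_comp]
      have : i ≠ n := by omega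
      rw [dif_neg this, zero_comp]
    · rw [dif_neg hj]
      rw [comp_zero]
      have : ((HomologicalComplex.single A (ComplexShape.up ℤ) n).obj M).d i j = 0 := by simp
      rw [this, comp_zero]

/-- The quotient functor `C^b(A) ⥤ K(A)` (restricted from all complexes). -/
noncomputable abbrev homotopyQ : CochainComplex A ℤ ⥤ HomotopyCategory A (ComplexShape.up ℤ) :=
  HomotopyCategory.quotient A (ComplexShape.up ℤ)

/-- The canonical embedding of `A` into the homotopy category, as complexes concentrated
in degree `0`. -/
noncomputable abbrev iotaA : A ⥤ HomotopyCategory A (ComplexShape.up ℤ) :=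
  HomologicalComplex.single A (ComplexShape.up ℤ) 0 ⋙ homotopyQ

/-- `B`: the set of cones of elements of `S`, viewed in the homotopy category. -/
def coneSet (S : MorphismProperty A) : Set (HomotopyCategory A (ComplexShape.up ℤ)) :=
  {X | ∃ (P Q : A) (s : P ⟶ Q), S s ∧ X = homotopyQ.obj (twoComplex (-1) s)}

/-- The Verdier localization functor of the homotopy category by the triangulated
subcategory `𝔻` generated by the cones of elements of `S`. -/
noncomputable abbrev locQ (S : MorphismProperty A) :
    HomotopyCategory A (ComplexShape.up ℤ) ⥤ (genSubcat (coneSet S)).trW.Localization :=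
  (genSubcat (coneSet S)).trW.Q

/-- The composite functor `A ⥤ K(A) ⥤ K(A)/𝔻`. -/
noncomputable abbrev uBig (S : MorphismProperty A) :
    A ⥤ (genSubcat (coneSet S)).trW.Localization :=
  iotaA ⋙ locQ S

/-- `A[S⁻¹]_add`: the full subcategory of the Verdier quotient whose
objects are those of `A` (viewed as complexes concentrated in degree `0`). -/
def AddLoc (S : MorphismProperty A) : Type u := A

noncomputable instance (S : MorphismProperty A) : Category (AddLoc S) where
  Hom X Y := (uBig S).obj X ⟶ (uBig S).obj Y
  id X := 𝟙 ((uBig S).obj X)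
  comp f g := f ≫ g

/-- The canonical functor `u : A ⥤ A[S⁻¹]_add` induced by the localization functor. -/
noncomputable def uFun (S : MorphismProperty A) : A ⥤ AddLoc S where
  obj X := X
  map f := (uBig S).map f
  map_id X := (uBig S).map_id X
  map_comp f g := (uBig S).map_comp f g

noncomputable instance (S : MorphismProperty A) : Preadditive (AddLoc S) where
  homGroup X Y := inferInstanceAs (AddCommGroup ((uBig S).obj X ⟶ (uBig S).obj Y))
  add_comp P Q R f f' g :=
    @Preadditive.add_comp _ _ _ ((uBig S).obj P) ((uBig S).obj Q) ((uBig S).obj R) f f' g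
  comp_add P Q R f g g' :=
    @Preadditive.comp_add _ _ _ ((uBig S).obj P) ((uBig S).obj Q) ((uBig S).obj R) f g g'

end KPrelude

/-!
There are no nonzero morphisms of positive degree between objects of `A`. Filtering by the shift
degree of the generating cones, every object of `𝔻` is therefore an iterated extension of one part
in negative, one in zero and one in positive degrees. Represent `f : M ⟶ N` by a roof `M ⟵ X ⟶ N`
whose left leg has its cone in `𝔻`. Since objects of `A` have no morphisms to the positive part,
that part is removed by precomposing the roof; since the negative part has no morphisms to `N⟦1⟧`,
it is removed by extending `X ⟶ N`. What is left of the cone is in degree zero, and as cones of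
morphisms of `A` are closed under extensions, it is the cone of some `d : P ⟶ Q` in `A`. Then `X` is
a homotopy pullback of `d` along a morphism `a : M ⟶ Q` of `A`, so that `X ⟶ N` factors through a
map `X ⟶ M ⊞ P`, on which the morphism `s = (1, -a; 0, d)` to `M ⊞ Q` restricts to the coretraction
of `M`.
-/

open ObjectProperty

section ExtensionClosure

variable {C : Type u} [Category.{v} C] [HasZeroObject C] [HasShift C ℤ] [Preadditive C]
  [∀ n : ℤ, (shiftFunctor C n).Additive] [Pretriangulated C]

lemma isClosedUnderIsomorphisms_of_ext₂ {P : ObjectProperty C} (hzero : ∀ X, IsZero X → P X)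
    (hext : ∀ T ∈ distTriang C, P T.obj₁ → P T.obj₃ → P T.obj₂) :
    P.IsClosedUnderIsomorphisms where
  of_iso {X Y} e hX :=
    hext (Triangle.mk e.hom (0 : Y ⟶ 0) 0)
      ((Triangle.distinguished_iff_of_isZero₃ _ (isZero_zero C)).2 (inferInstanceAs (IsIso e.hom)))
      hX (hzero _ (isZero_zero C))

instance (B : Set C) : (genSubcat B).IsClosedUnderIsomorphisms :=
  isClosedUnderIsomorphisms_of_ext₂ genSub.zero genSub.ext₂

instance (E : Set C) : IsClosedUnderIsomorphisms (extClosure E) :=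
  isClosedUnderIsomorphisms_of_ext₂ extClosure.zero extClosure.ext₂

instance (E : Set C) : ContainsZero (extClosure E) where
  exists_zero := ⟨0, isZero_zero C, extClosure.zero _ (isZero_zero C)⟩

instance (E : Set C) : IsTriangulatedClosed₂ (extClosure E) := .mk' extClosure.ext₂

lemma extClosure_le {E : Set C} {P : ObjectProperty C} [P.ContainsZero]
    [P.IsClosedUnderIsomorphisms] [P.IsTriangulatedClosed₂] (hE : ∀ X ∈ E, P X) :
    extClosure E ≤ P := by
  intro X hX
  induction hX with
  | of X h => exact hE X h
  | zero X h => exact P.prop_of_isZero h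
  | ext₂ T hT _ _ h₁ h₃ => exact P.ext_of_isTriangulatedClosed₂ T hT h₁ h₃

lemma extClosure_le_leftOrthogonal {E₁ E₂ : Set C}
    (h : ∀ X ∈ E₁, ∀ Y ∈ E₂, ∀ f : X ⟶ Y, f = 0) :
    extClosure E₁ ≤ leftOrthogonal (extClosure E₂) := by
  have hE₂ : extClosure E₂ ≤ rightOrthogonal (· ∈ E₁) :=
    extClosure_le fun Y hY X f hX => h X hX Y hY f
  exact extClosure_le fun X hX Y f hY => hE₂ Y hY f hX

/-- The extension-closure of the shifts `Y⟦l⟧` of the objects `Y ∈ B` by the integers `l ∈ I`.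
It is `D_{[i,j]}` when `I` is the interval `[i, j]`, but half-lines are allowed as well. -/
def shiftEnvelope (B : Set C) (I : Set ℤ) : ObjectProperty C :=
  extClosure {X | ∃ Y ∈ B, ∃ l ∈ I, Nonempty (X ≅ Y⟦l⟧)}

instance (B : Set C) (I : Set ℤ) : (shiftEnvelope B I).ContainsZero :=
  inferInstanceAs (ContainsZero (extClosure _))

instance (B : Set C) (I : Set ℤ) : (shiftEnvelope B I).IsClosedUnderIsomorphisms :=
  inferInstanceAs (IsClosedUnderIsomorphisms (extClosure _))

instance (B : Set C) (I : Set ℤ) : (shiftEnvelope B I).IsTriangulatedClosed₂ :=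
  inferInstanceAs (IsTriangulatedClosed₂ (extClosure _))

lemma shiftEnvelope_le {B : Set C} {I : Set ℤ} {P : ObjectProperty C} [P.ContainsZero]
    [P.IsClosedUnderIsomorphisms] [P.IsTriangulatedClosed₂]
    (h : ∀ X ∈ B, ∀ l ∈ I, P (X⟦l⟧)) : shiftEnvelope B I ≤ P :=
  extClosure_le fun _ ⟨Y, hY, l, hl, ⟨e⟩⟩ => P.prop_of_iso e.symm (h Y hY l hl)

lemma shiftEnvelope_shift_of_mem {B : Set C} {I : Set ℤ} {X : C} (hX : X ∈ B) {l : ℤ}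
    (hl : l ∈ I) : shiftEnvelope B I (X⟦l⟧) :=
  extClosure.of _ ⟨X, hX, l, hl, ⟨Iso.refl _⟩⟩

lemma shiftEnvelope_of_mem {B : Set C} {I : Set ℤ} (hI : 0 ∈ I) {X : C} (hX : X ∈ B) :
    shiftEnvelope B I X :=
  prop_of_iso _ ((shiftFunctorZero C ℤ).app X) (shiftEnvelope_shift_of_mem hX hI)

lemma shiftEnvelope_shift {B : Set C} {I J : Set ℤ} {n : ℤ} (h : ∀ l ∈ I, l + n ∈ J) {X : C}
    (hX : shiftEnvelope B I X) : shiftEnvelope B J (X⟦n⟧) := by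
  induction hX with
  | of X hX =>
    obtain ⟨Y, hY, l, hl, ⟨e⟩⟩ := hX
    exact extClosure.of _ ⟨Y, hY, l + n, h l hl,
      ⟨(shiftFunctor C n).mapIso e ≪≫ (shiftFunctorAdd C l n).symm.app Y⟩⟩
  | zero X hX => exact extClosure.zero _ ((shiftFunctor C n).map_isZero hX)
  | ext₂ T hT _ _ h₁ h₃ => exact extClosure.ext₂ _ (T.shift_distinguished hT n) h₁ h₃

lemma shiftEnvelope_le_shiftEnvelope {B B' : Set C} {I J K : Set ℤ}
    (hB : ∀ X ∈ B, shiftEnvelope B' J X) (hK : ∀ i ∈ I, ∀ j ∈ J, j + i ∈ K) :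
    shiftEnvelope B I ≤ shiftEnvelope B' K :=
  shiftEnvelope_le fun X hX i hi => shiftEnvelope_shift (hK i hi) (hB X hX)

lemma shiftEnvelope_le_genSubcat (B : Set C) (I : Set ℤ) : shiftEnvelope B I ≤ genSubcat B :=
  shiftEnvelope_le fun X hX l _ => genSub.shift _ l (genSub.of X hX)

lemma genSubcat_eq_shiftEnvelope (B : Set C) : genSubcat B = shiftEnvelope B Set.univ := by
  refine le_antisymm (fun X hX => ?_) (shiftEnvelope_le_genSubcat B _)
  induction hX with
  | of X h => exact shiftEnvelope_of_mem (Set.mem_univ _) h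
  | zero X h => exact extClosure.zero _ h
  | shift X n _ h => exact shiftEnvelope_shift (fun _ _ => Set.mem_univ _) h
  | ext₂ T hT _ _ h₁ h₃ => exact extClosure.ext₂ T hT h₁ h₃

end ExtensionClosure

section ExtensionProduct

variable {C : Type u} [Category.{v} C] [HasZeroObject C] [HasShift C ℤ] [Preadditive C]
  [∀ n : ℤ, (shiftFunctor C n).Additive] [Pretriangulated C]

lemma extensionProduct_swap_le {P Q : ObjectProperty C}
    (hPQ : ∀ X Y, P X → Q Y → ∀ f : X ⟶ Y⟦(1 : ℤ)⟧, f = 0) :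
    extensionProduct Q P ≤ extensionProduct P Q := by
  rintro X ⟨Y, Z, f, g, h, hT, hY, hZ⟩
  obtain ⟨e, -, -⟩ := exists_iso_binaryBiproduct_of_distTriang _ hT (hPQ Z Y hZ hY h)
  exact prop_of_iso _ (e ≪≫ biprod.braiding _ _).symm
    ⟨_, _, _, _, _, binaryBiproductTriangle_distinguished Z Y, hZ, hY⟩

/- By associativity, `(P * Q) * (P * Q) = P * (Q * P) * Q ≤ P * (P * Q) * Q = (P * P) * (Q * Q)`. -/
lemma isTriangulatedClosed₂_extensionProduct [IsTriangulated C] {P Q : ObjectProperty C}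
    [P.IsTriangulatedClosed₂] [P.IsClosedUnderIsomorphisms]
    [Q.IsTriangulatedClosed₂] [Q.IsClosedUnderIsomorphisms]
    (hPQ : ∀ X Y, P X → Q Y → ∀ f : X ⟶ Y⟦(1 : ℤ)⟧, f = 0) :
    (extensionProduct P Q).IsTriangulatedClosed₂ := by
  have hP : extensionProduct P P ≤ P := extensionProduct_le_of_isTriangulatedClosed₂ le_rfl le_rfl
  have hQ : extensionProduct Q Q ≤ Q := extensionProduct_le_of_isTriangulatedClosed₂ le_rfl le_rfl
  have hPQPQ : extensionProduct (extensionProduct P Q) (extensionProduct P Q) ≤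
      extensionProduct P Q :=
    calc extensionProduct (extensionProduct P Q) (extensionProduct P Q)
      _ = extensionProduct P (extensionProduct (extensionProduct Q P) Q) := by
        rw [extensionProduct_assoc, extensionProduct_assoc Q P Q]
      _ ≤ extensionProduct P (extensionProduct (extensionProduct P Q) Q) :=
        monotone_extensionProduct_right _
          (monotone_extensionProduct_left _ (extensionProduct_swap_le hPQ))
      _ = extensionProduct (extensionProduct P P) (extensionProduct Q Q) := by
        rw [extensionProduct_assoc P Q Q, extensionProduct_assoc]
      _ ≤ extensionProduct P (extensionProduct Q Q) := monotone_extensionProduct_left _ hP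
      _ ≤ extensionProduct P Q := monotone_extensionProduct_right _ hQ
  exact .mk' fun T hT h₁ h₃ => hPQPQ _ ⟨_, _, _, _, _, hT, h₁, h₃⟩

lemma shiftEnvelope_union_le [IsTriangulated C] {B : Set C} {I J : Set ℤ}
    (hIJ : ∀ X Y, shiftEnvelope B I X → shiftEnvelope B J Y → ∀ f : X ⟶ Y⟦(1 : ℤ)⟧, f = 0) :
    shiftEnvelope B (I ∪ J) ≤ extensionProduct (shiftEnvelope B I) (shiftEnvelope B J) := by
  have := isTriangulatedClosed₂_extensionProduct hIJ
  have : (extensionProduct (shiftEnvelope B I) (shiftEnvelope B J)).ContainsZero :=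
    ⟨0, isZero_zero C, le_extensionProduct_left _ _ (prop_zero _)⟩
  refine shiftEnvelope_le fun X hX l hl => ?_
  rcases hl with hl | hl
  · exact le_extensionProduct_left _ _ (shiftEnvelope_shift_of_mem hX hl)
  · exact le_extensionProduct_right _ _ (shiftEnvelope_shift_of_mem hX hl)

end ExtensionProduct

section Roofs

variable {C : Type u} [Category.{v} C] [HasZeroObject C] [HasShift C ℤ] [Preadditive C]
  [∀ n : ℤ, (shiftFunctor C n).Additive] [Pretriangulated C]

lemma yoneda_exact₁ {T : Triangle C} (hT : T ∈ distTriang C) {W : C} (f : T.obj₁ ⟶ W)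
    (hf : T.mor₃ ≫ f⟦(1 : ℤ)⟧' = 0) : ∃ g : T.obj₂ ⟶ W, f = T.mor₁ ≫ g := by
  obtain ⟨g, hg, -⟩ := complete_distinguished_triangle_morphism₂ T _ hT
    (contractible_distinguished W) f 0 (hf.trans zero_comp.symm)
  exact ⟨g, (hg.trans (Category.comp_id f)).symm⟩

lemma exists_trW_comp_of_leftOrthogonal {P Q : ObjectProperty C} {X Y : C} {p : X ⟶ Y}
    (hp : (extensionProduct P Q).trW p) (hY : Q.leftOrthogonal Y) :
    ∃ (X' : C) (k : X' ⟶ X), P.trW (k ≫ p) := by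
  obtain ⟨D, α, δ, hT, D', R, i, r, w, hD, hD', hR⟩ := hp
  obtain ⟨α', hα' : α = α' ≫ i⟩ := Triangle.coyoneda_exact₂ _ hD α (hY _ hR)
  obtain ⟨X', p', δ', hT'⟩ := distinguished_cocone_triangle₁ α'
  obtain ⟨k, hk : p' ≫ 𝟙 Y = k ≫ p, -⟩ := complete_distinguished_triangle_morphism₁ _ _ hT' hT
    (𝟙 Y) i (hα'.symm.trans (Category.id_comp α).symm)
  rw [Category.comp_id] at hk
  exact ⟨X', k, hk ▸ trW.mk P hT' hD'⟩

lemma exists_trW_factorization [IsTriangulated C] {P Q : ObjectProperty C} {X Y : C} {p : X ⟶ Y}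
    (hp : (extensionProduct P Q).trW p) :
    ∃ (X' : C) (k : X ⟶ X') (p' : X' ⟶ Y), P.trW k ∧ Q.trW p' ∧ k ≫ p' = p := by
  obtain ⟨D, α, δ, hT, L, R, i, r, w, hD, hL, hR⟩ := hp
  obtain ⟨X', p', δ', hT'⟩ := distinguished_cocone_triangle₁ (α ≫ r)
  let o := Triangulated.someOctahedron' rfl hT hD hT'
  exact ⟨X', o.m₁, p', trW.mk P o.mem hL, trW.mk Q hT' hR, o.comm₁⟩

lemma exists_comp_eq_of_trW {P : ObjectProperty C} {X X' M : C} {k : X ⟶ X'} (hk : P.trW k)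
    (hM : P.rightOrthogonal (M⟦(1 : ℤ)⟧)) (h : X ⟶ M) : ∃ h' : X' ⟶ M, h = k ≫ h' := by
  obtain ⟨L, _, δ, hT, hL⟩ := hk
  exact yoneda_exact₁ hT h (hM _ hL)

lemma exists_eq_add_of_distTriang {X Y P Q D M : C} {p : X ⟶ Y} {α : Y ⟶ D}
    {δ : D ⟶ X⟦(1 : ℤ)⟧} (hT : Triangle.mk p α δ ∈ distTriang C) {d : P ⟶ Q} {j : Q ⟶ D}
    {q : D ⟶ P⟦(1 : ℤ)⟧} (hT' : Triangle.mk d j q ∈ distTriang C) {b : X ⟶ P}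
    (hb : δ ≫ b⟦(1 : ℤ)⟧' = q) (hM : ∀ f : Q ⟶ M⟦(1 : ℤ)⟧, f = 0) (h : X ⟶ M) :
    ∃ (u : Y ⟶ M) (v : P ⟶ M), h = p ≫ u + b ≫ v := by
  obtain ⟨w, hw : δ ≫ h⟦(1 : ℤ)⟧' = q ≫ w⟩ := Triangle.yoneda_exact₃ _ hT' _ (hM _)
  obtain ⟨v, rfl⟩ := (shiftFunctor C (1 : ℤ)).map_surjective (X := P) w
  have hv : δ ≫ (h - b ≫ v)⟦(1 : ℤ)⟧' = 0 := by
    rw [Functor.map_sub, Functor.map_comp, Preadditive.comp_sub, reassoc_of% hb, hw, sub_self]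
  obtain ⟨u, hu : h - b ≫ v = p ≫ u⟩ := yoneda_exact₁ hT _ hv
  exact ⟨u, v, sub_eq_iff_eq_add.1 hu⟩

end Roofs

section Presilting

variable {C : Type u} [Category.{v} C] [HasShift C ℤ] [Preadditive C]
  [∀ n : ℤ, (shiftFunctor C n).Additive] {A : Type u'} [Category.{v'} A]

/-- A functor to a triangulated category is presilting if there are no nonzero morphisms of
positive degree between the objects in its image. The embedding of an additive category into its
homotopy category is the example of interest. -/
def IsPresilting (ι : A ⥤ C) : Prop :=
  ∀ (P Q : A) (n : ℤ), 0 < n → ∀ f : ι.obj P ⟶ (ι.obj Q)⟦n⟧, f = 0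

lemma IsPresilting.hom_shift_eq_zero {ι : A ⥤ C} (hι : IsPresilting ι) {P Q : A} {l m : ℤ}
    (hlm : l < m) (f : (ι.obj P)⟦l⟧ ⟶ (ι.obj Q)⟦m⟧) : f = 0 := by
  let e : (ι.obj Q)⟦m⟧ ≅ ((ι.obj Q)⟦m - l⟧)⟦l⟧ :=
    (shiftFunctorAdd' C (m - l) l m (sub_add_cancel m l)).app _
  obtain ⟨g, hg⟩ := (shiftFunctor C l).map_surjective (f ≫ e.hom)
  rw [← cancel_mono e.hom, ← hg, hι P Q _ (sub_pos.2 hlm) g, Functor.map_zero, zero_comp]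

variable [HasZeroObject C] [Pretriangulated C]

lemma IsPresilting.hom_eq_zero {ι : A ⥤ C} (hι : IsPresilting ι) {I J : Set ℤ}
    (hIJ : ∀ i ∈ I, ∀ j ∈ J, i < j) {X Y : C} (hX : shiftEnvelope (Set.range ι.obj) I X)
    (hY : shiftEnvelope (Set.range ι.obj) J Y) (f : X ⟶ Y) : f = 0 := by
  refine extClosure_le_leftOrthogonal ?_ X hX f hY
  rintro X ⟨_, ⟨P, rfl⟩, i, hi, ⟨eX⟩⟩ Y ⟨_, ⟨Q, rfl⟩, j, hj, ⟨eY⟩⟩ f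
  rw [← cancel_epi eX.inv, ← cancel_mono eY.hom, hι.hom_shift_eq_zero (hIJ i hi j hj) (_ ≫ _),
    comp_zero, zero_comp]

/-- The property of being a cone of the image of a morphism of `A`, i.e. of being given by a
complex with two consecutive terms in `A`. -/
def IsTwoTerm (ι : A ⥤ C) : ObjectProperty C := fun D =>
  ∃ (P Q : A) (d : P ⟶ Q) (j : ι.obj Q ⟶ D) (q : D ⟶ (ι.obj P)⟦(1 : ℤ)⟧),
    Triangle.mk (ι.map d) j q ∈ distTriang C

lemma IsTwoTerm.shiftEnvelope_range {ι : A ⥤ C} {D : C} (hD : IsTwoTerm ι D) :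
    shiftEnvelope (Set.range ι.obj) {0, 1} D := by
  obtain ⟨P, Q, d, j, q, hT⟩ := hD
  exact ext_of_isTriangulatedClosed₂ _ _ (rot_of_distTriang _ hT)
    (shiftEnvelope_of_mem (by simp) (Set.mem_range_self Q))
    (shiftEnvelope_shift_of_mem (Set.mem_range_self P) (by simp))

section

variable {ι : A ⥤ C} {B : Set C}

lemma shiftEnvelope_le_of_isTwoTerm (hB : ∀ X ∈ B, IsTwoTerm ι X) {I K : Set ℤ}
    (hK : ∀ i ∈ I, i ∈ K ∧ i + 1 ∈ K) :
    shiftEnvelope B I ≤ shiftEnvelope (Set.range ι.obj) K := by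
  refine shiftEnvelope_le_shiftEnvelope (fun X hX => (hB X hX).shiftEnvelope_range) ?_
  rintro i hi _ (rfl | rfl)
  · simpa using (hK i hi).1
  · simpa [add_comm] using (hK i hi).2

namespace IsPresilting

lemma leftOrthogonal_obj (hι : IsPresilting ι) (hB : ∀ X ∈ B, IsTwoTerm ι X) (P : A) :
    (shiftEnvelope B (Set.Ioi 0)).leftOrthogonal (ι.obj P) := fun Y f hY =>
  hι.hom_eq_zero (I := {0}) (J := Set.Ioi 0) (by simp)
    (shiftEnvelope_of_mem (Set.mem_singleton 0) (Set.mem_range_self P))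
    (shiftEnvelope_le_of_isTwoTerm hB (by simp only [Set.mem_Ioi]; lia) Y hY) f

lemma rightOrthogonal_obj_shift (hι : IsPresilting ι) (hB : ∀ X ∈ B, IsTwoTerm ι X) (P : A) :
    (shiftEnvelope B (Set.Iio 0)).rightOrthogonal ((ι.obj P)⟦(1 : ℤ)⟧) := fun X f hX =>
  hι.hom_eq_zero (I := Set.Iic 0) (J := {1})
    (by simp only [Set.mem_Iic, Set.mem_singleton_iff]; lia)
    (shiftEnvelope_le_of_isTwoTerm hB (by simp only [Set.mem_Iio, Set.mem_Iic]; lia) X hX)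
    (shiftEnvelope_shift_of_mem (Set.mem_range_self P) rfl) f

lemma shiftEnvelope_union_le [IsTriangulated C] (hι : IsPresilting ι)
    (hB : ∀ X ∈ B, IsTwoTerm ι X) {I J : Set ℤ} (hIJ : ∀ i ∈ I, ∀ j ∈ J, i < j) :
    shiftEnvelope B (I ∪ J) ≤ extensionProduct (shiftEnvelope B I) (shiftEnvelope B J) := by
  refine _root_.shiftEnvelope_union_le fun X Y hX hY => ?_
  have hX' : shiftEnvelope (Set.range ι.obj) (lowerBounds J) X :=
    shiftEnvelope_le_of_isTwoTerm hB
      (fun i hi => ⟨fun j hj => (hIJ i hi j hj).le, fun j hj => hIJ i hi j hj⟩) X hX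
  have hY' : shiftEnvelope (Set.range ι.obj) (upperBounds (lowerBounds J)) Y :=
    shiftEnvelope_le_of_isTwoTerm hB
      (fun j hj => ⟨fun i hi => hi hj, fun i hi => (hi hj).trans (by lia)⟩) Y hY
  exact hι.hom_eq_zero (fun i hi m hm => by have := hm hi; lia) hX'
    (shiftEnvelope_shift (J := {m | m - 1 ∈ upperBounds (lowerBounds J)})
      (fun l hl => by simpa using hl) hY')

lemma genSubcat_le_extensionProduct [IsTriangulated C] (hι : IsPresilting ι)
    (hB : ∀ X ∈ B, IsTwoTerm ι X) :
    genSubcat B ≤ extensionProduct (shiftEnvelope B (Set.Iio 0))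
      (extensionProduct (shiftEnvelope B {0}) (shiftEnvelope B (Set.Ioi 0))) :=
  calc genSubcat B
    _ = shiftEnvelope B (Set.Iio 0 ∪ ({0} ∪ Set.Ioi 0)) := by
      rw [genSubcat_eq_shiftEnvelope, ← Set.insert_eq, Set.Ioi_insert, Set.Iio_union_Ici]
    _ ≤ extensionProduct (shiftEnvelope B (Set.Iio 0)) (shiftEnvelope B ({0} ∪ Set.Ioi 0)) :=
      hι.shiftEnvelope_union_le hB fun i (hi : i < 0) j hj => by
        rcases hj with rfl | (hj : 0 < j) <;> lia
    _ ≤ _ := monotone_extensionProduct_right _ (hι.shiftEnvelope_union_le hB (by simp))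

lemma exists_roof [IsTriangulated C] (hι : IsPresilting ι) (hB : ∀ X ∈ B, IsTwoTerm ι X)
    {E : Type*} [Category E] (L : C ⥤ E) [L.IsLocalization (genSubcat B).trW] {M N : A}
    (f : L.obj (ι.obj M) ⟶ L.obj (ι.obj N)) :
    ∃ (X : C) (p : X ⟶ ι.obj M) (h : X ⟶ ι.obj N),
      (shiftEnvelope B {0}).trW p ∧ L.map p ≫ f = L.map h := by
  obtain ⟨ψ, hf⟩ := Localization.exists_rightFraction L (genSubcat B).trW f
  have hψ : L.map ψ.s ≫ f = L.map ψ.f := by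
    rw [hf, MorphismProperty.RightFraction.map_s_comp_map]
  obtain ⟨p, hp, h⟩ := ψ
  obtain ⟨X₁, k, p₁, hk, hp₁, rfl⟩ :=
    exists_trW_factorization (trW_monotone (hι.genSubcat_le_extensionProduct hB) p hp)
  obtain ⟨h₁, rfl⟩ := exists_comp_eq_of_trW hk (hι.rightOrthogonal_obj_shift hB N) h
  obtain ⟨X₂, k₂, hp₂⟩ := exists_trW_comp_of_leftOrthogonal hp₁ (hι.leftOrthogonal_obj hB M)
  have : IsIso (L.map k) :=
    Localization.inverts L _ k (trW_monotone (shiftEnvelope_le_genSubcat B _) k hk)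
  have hp₁f : L.map p₁ ≫ f = L.map h₁ := by
    rwa [← cancel_epi (L.map k), ← L.map_comp_assoc, ← L.map_comp]
  exact ⟨X₂, k₂ ≫ p₁, k₂ ≫ h₁, hp₂, by simp only [L.map_comp, Category.assoc, hp₁f]⟩

end IsPresilting

end

variable [Preadditive A] [HasFiniteBiproducts A]

lemma isTriangulatedClosed₂_essImage (F : A ⥤ C) [F.Additive]
    (hF : ∀ (P Q : A) (f : F.obj P ⟶ (F.obj Q)⟦(1 : ℤ)⟧), f = 0) :
    F.essImage.IsTriangulatedClosed₂ := by
  have : PreservesFiniteBiproducts F := F.preservesFiniteBiproductsOfAdditive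
  have : PreservesBinaryBiproducts F := preservesBinaryBiproducts_of_preservesBiproducts F
  refine .mk' fun T hT ⟨P, ⟨eP⟩⟩ ⟨Q, ⟨eQ⟩⟩ => ?_
  have hT₃ : T.mor₃ = 0 := by
    rw [← cancel_epi eQ.hom, ← cancel_mono (eP.inv⟦(1 : ℤ)⟧'), hF _ _ (_ ≫ _), comp_zero, zero_comp]
  obtain ⟨e, -, -⟩ := exists_iso_binaryBiproduct_of_distTriang T hT hT₃
  exact ⟨P ⊞ Q, ⟨F.mapBiprod P Q ≪≫ biprod.mapIso eP eQ ≪≫ e.symm⟩⟩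

variable {ι : A ⥤ C} [ι.Additive]

lemma IsPresilting.shiftEnvelope_singleton_le_essImage (hι : IsPresilting ι) (n : ℤ) :
    shiftEnvelope (Set.range ι.obj) {n} ≤ (ι ⋙ shiftFunctor C n).essImage := by
  have hzero (P Q : A) (f : (ι.obj P)⟦n⟧ ⟶ ((ι.obj Q)⟦n⟧)⟦(1 : ℤ)⟧) : f = 0 :=
    hι.hom_eq_zero (I := {n}) (J := {n + 1}) (by simp)
      (shiftEnvelope_shift_of_mem (Set.mem_range_self P) rfl)
      (shiftEnvelope_shift (I := {n}) (by simp)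
        (shiftEnvelope_shift_of_mem (Set.mem_range_self Q) rfl)) f
  have := isTriangulatedClosed₂_essImage (ι ⋙ shiftFunctor C n) hzero
  have : (ι ⋙ shiftFunctor C n).essImage.ContainsZero :=
    ⟨_, Functor.map_isZero _ (isZero_zero A), Functor.obj_mem_essImage _ 0⟩
  refine shiftEnvelope_le ?_
  rintro _ ⟨P, rfl⟩ _ rfl
  exact Functor.obj_mem_essImage (ι ⋙ shiftFunctor C _) P

lemma IsPresilting.isTwoTerm_of_shiftEnvelope [IsTriangulated C] [ι.Full] (hι : IsPresilting ι)
    {D : C} (hD : shiftEnvelope (Set.range ι.obj) {0, 1} D) : IsTwoTerm ι D := by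
  obtain ⟨Y, Z, f, g, h, hT, hY, hZ⟩ :=
    _root_.shiftEnvelope_union_le (I := {0}) (J := {1}) (fun X Y hX hY => hι.hom_eq_zero
      (I := {0}) (J := {2}) (by simp) hX (shiftEnvelope_shift (by simp) hY)) D hD
  obtain ⟨Q, ⟨eQ⟩⟩ := hι.shiftEnvelope_singleton_le_essImage 0 Y hY
  obtain ⟨P, ⟨eP : (ι.obj P)⟦(1 : ℤ)⟧ ≅ Z⟩⟩ := hι.shiftEnvelope_singleton_le_essImage 1 Z hZ
  let e : ι.obj Q ≅ Y := ((shiftFunctorZero C ℤ).app _).symm ≪≫ eQ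
  obtain ⟨d, hd⟩ := (ι ⋙ shiftFunctor C (1 : ℤ)).map_surjective
    (-(eP.hom ≫ h ≫ e.inv⟦(1 : ℤ)⟧'))
  refine ⟨P, Q, d, e.hom ≫ f, g ≫ eP.inv, ?_⟩
  rw [rotate_distinguished_triangle]
  refine isomorphic_distinguished _ hT _ (Triangle.isoMk _ _ e (Iso.refl _) eP ?_ ?_ ?_)
  · exact Category.comp_id _
  · change (g ≫ eP.inv) ≫ eP.hom = 𝟙 _ ≫ g
    simp
  · change (-(ι ⋙ shiftFunctor C (1 : ℤ)).map d) ≫ e.hom⟦(1 : ℤ)⟧' = eP.hom ≫ h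
    rw [hd]
    simp [← Functor.map_comp]

end Presilting

section Presentation

variable {C : Type u} [Category.{v} C] [Preadditive C]
  {A : Type u'} [Category.{v'} A] [Preadditive A] [HasFiniteBiproducts A]

lemma map_biprodMap_mem {W : MorphismProperty C} [W.IsStableUnderFiniteProducts] (F : A ⥤ C)
    [F.Additive] {X₁ X₂ Y₁ Y₂ : A} {f₁ : X₁ ⟶ Y₁} {f₂ : X₂ ⟶ Y₂} (hf₁ : W (F.map f₁))
    (hf₂ : W (F.map f₂)) : W (F.map (biprod.map f₁ f₂)) := by
  have : PreservesFiniteBiproducts F := F.preservesFiniteBiproductsOfAdditive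
  have : PreservesBinaryBiproducts F := preservesBinaryBiproducts_of_preservesBiproducts F
  have hW : W.IsStableUnderProductsOfShape WalkingPair := inferInstance
  refine hW.condition _ _ _ _
    (isBinaryBilimitOfPreserves F (BinaryBiproduct.isBilimit X₁ X₂)).isLimit
    (isBinaryBilimitOfPreserves F (BinaryBiproduct.isBilimit Y₁ Y₂)).isLimit
    (mapPair (F.map f₁) (F.map f₂)) ?_ _ ?_
  · rintro ⟨_ | _⟩
    exacts [hf₁, hf₂]
  · rintro ⟨_ | _⟩
    · change F.map _ ≫ F.map biprod.fst = F.map biprod.fst ≫ F.map f₁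
      simp only [← F.map_comp, biprod.map_fst]
    · change F.map _ ≫ F.map biprod.snd = F.map biprod.snd ≫ F.map f₂
      simp only [← F.map_comp, biprod.map_snd]

variable [HasZeroObject C] [HasShift C ℤ] [∀ n : ℤ, (shiftFunctor C n).Additive]
  [Pretriangulated C] {ι : A ⥤ C} [ι.Additive] [ι.Full]

lemma IsPresilting.exists_factorization_of_distTriang (hι : IsPresilting ι) {X D : C} {M N : A}
    {p : X ⟶ ι.obj M} {α : ι.obj M ⟶ D} {δ : D ⟶ X⟦(1 : ℤ)⟧}
    (hT : Triangle.mk p α δ ∈ distTriang C) (hD : IsTwoTerm ι D)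
    (W : ObjectProperty C) [W.IsTriangulated] (hDW : W D) (h : X ⟶ ι.obj N) :
    ∃ (A' T : A) (g : A' ⟶ N) (s : A' ⟶ M ⊞ T) (x : X ⟶ ι.obj A'),
      W.trW (ι.map s) ∧ x ≫ ι.map s = p ≫ ι.map biprod.inl ∧ x ≫ ι.map g = h := by
  obtain ⟨P, Q, d, j, q, hT'⟩ := hD
  obtain ⟨a, ha⟩ : ∃ a : M ⟶ Q, α = ι.map a ≫ j := by
    obtain ⟨a, ha⟩ := Triangle.coyoneda_exact₃ _ hT' α (hι M P 1 one_pos _)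
    obtain ⟨a, rfl⟩ := ι.map_surjective a
    exact ⟨a, ha⟩
  obtain ⟨(b : X ⟶ ι.obj P), hb₁ : p ≫ ι.map a = b ≫ ι.map d, hb₂ : δ ≫ b⟦(1 : ℤ)⟧' = 𝟙 D ≫ q⟩ :=
    complete_distinguished_triangle_morphism₁ _ _ hT hT' (ι.map a) (𝟙 D)
      ((Category.comp_id α).trans ha)
  rw [Category.id_comp] at hb₂
  obtain ⟨u, v, rfl⟩ := exists_eq_add_of_distTriang hT hT' hb₂ (hι Q N 1 one_pos) h
  obtain ⟨gM, rfl⟩ := ι.map_surjective u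
  obtain ⟨gP, rfl⟩ := ι.map_surjective v
  refine ⟨M ⊞ P, Q, biprod.desc gM gP,
    biprod.map (𝟙 M) d ≫ (Biprod.unipotentUpper (-a)).hom,
    p ≫ ι.map biprod.inl + b ≫ ι.map (biprod.inr : P ⟶ M ⊞ P), ?_, ?_, ?_⟩
  · have hd : W.trW (ι.map d) := trW.mk W hT' hDW
    rw [ι.map_comp, W.trW.cancel_right_of_respectsIso]
    exact map_biprodMap_mem ι (W.trW_of_isIso _) hd
  · have hM : biprod.inl ≫ biprod.map (𝟙 M) d ≫ (Biprod.unipotentUpper (-a)).hom =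
        biprod.inl - a ≫ biprod.inr := by
      ext <;> simp
    have hP : biprod.inr ≫ biprod.map (𝟙 M) d ≫ (Biprod.unipotentUpper (-a)).hom =
        d ≫ biprod.inr := by
      ext <;> simp
    rw [Preadditive.add_comp, Category.assoc, Category.assoc, ← ι.map_comp, ← ι.map_comp, hM, hP,
      ι.map_sub, ι.map_comp, ι.map_comp, Preadditive.comp_sub, reassoc_of% hb₁, sub_add_cancel]
  · rw [Preadditive.add_comp, Category.assoc, Category.assoc, ← ι.map_comp, ← ι.map_comp,
      biprod.inl_desc, biprod.inr_desc]

end Presentation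

theorem statement10_general {C : Type u} [Category.{v} C] [HasZeroObject C] [HasShift C ℤ]
    [Preadditive C] [∀ n : ℤ, (shiftFunctor C n).Additive] [Pretriangulated C] [IsTriangulated C]
    {A : Type u'} [Category.{v'} A] [Preadditive A] [HasFiniteBiproducts A] {ι : A ⥤ C}
    [ι.Additive] [ι.Full] (hι : IsPresilting ι) {B : Set C} (hB : ∀ X ∈ B, IsTwoTerm ι X)
    {E : Type*} [Category E] (L : C ⥤ E) [L.IsLocalization (genSubcat B).trW] {M N : A}
    (f : L.obj (ι.obj M) ⟶ L.obj (ι.obj N)) :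
    ∃ (A' T : A) (g : A' ⟶ N) (s : A' ⟶ M ⊞ T), (genSubcat B).trW (ι.map s) ∧
      ∃ e : L.obj (ι.obj (M ⊞ T)) ⟶ L.obj (ι.obj N),
        L.map (ι.map s) ≫ e = L.map (ι.map g) ∧ f = L.map (ι.map biprod.inl) ≫ e := by
  obtain ⟨X, p, h, ⟨D, α, δ, hT, hD⟩, hpf⟩ := hι.exists_roof hB L f
  have hDB : genSubcat B D := shiftEnvelope_le_genSubcat B _ D hD
  have hD' : IsTwoTerm ι D :=
    hι.isTwoTerm_of_shiftEnvelope (shiftEnvelope_le_of_isTwoTerm hB (by simp) D hD)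
  obtain ⟨A', T, g, s, x, hs, hxs, hxg⟩ :=
    hι.exists_factorization_of_distTriang hT hD' (genSubcat B) hDB h
  have : IsIso (L.map (ι.map s)) := Localization.inverts L _ _ hs
  have : IsIso (L.map p) := Localization.inverts L _ _ (trW.mk _ hT hDB)
  refine ⟨A', T, g, s, hs, inv (L.map (ι.map s)) ≫ L.map (ι.map g), by simp, ?_⟩
  rw [← cancel_epi (L.map p), hpf, ← L.map_comp_assoc, ← hxs, L.map_comp, Category.assoc,
    IsIso.hom_inv_id_assoc, ← L.map_comp, hxg]

section MappingCone

open CochainComplex HomComplex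

variable {A : Type u} [Category.{v} A] [Preadditive A]

lemma isIso_mappingCone_inl_v {K L : CochainComplex A ℤ} (φ : K ⟶ L)
    [HomologicalComplex.HasHomotopyCofiber φ] {i j : ℤ} (hij : j + -1 = i) (hL : IsZero (L.X i)) :
    IsIso ((mappingCone.inl φ).v j i hij) :=
  ⟨(mappingCone.fst φ).1.v i j (by lia), by simp,
    mappingCone.ext_to φ i j (by lia) (by simp) (hL.eq_of_tgt _ _)⟩

lemma isIso_mappingCone_inr_f {K L : CochainComplex A ℤ} (φ : K ⟶ L)
    [HomologicalComplex.HasHomotopyCofiber φ] {i : ℤ} (hK : IsZero (K.X (i + 1))) :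
    IsIso ((mappingCone.inr φ).f i) :=
  ⟨(mappingCone.snd φ).v i i (add_zero i), by simp,
    mappingCone.ext_to φ i (i + 1) rfl (hK.eq_of_tgt _ _) (by simp)⟩

variable [HasZeroObject A]

lemma nonempty_double_iso {K : CochainComplex A ℤ} {i₀ i₁ : ℤ} (hi : (ComplexShape.up ℤ).Rel i₀ i₁)
    {X₀ X₁ : A} {f : X₀ ⟶ X₁} (e₀ : X₀ ≅ K.X i₀) (e₁ : X₁ ≅ K.X i₁)
    (comm : e₀.hom ≫ K.d i₀ i₁ = f ≫ e₁.hom)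
    (hK : ∀ k, k ≠ i₀ → k ≠ i₁ → IsZero (K.X k)) :
    Nonempty (HomologicalComplex.double f hi ≅ K) := by
  obtain rfl : i₁ = i₀ + 1 := hi.symm
  have hd (k : ℤ) (hk : (ComplexShape.up ℤ).Rel (i₀ + 1) k) : e₁.hom ≫ K.d (i₀ + 1) k = 0 := by
    obtain rfl : k = i₀ + 1 + 1 := hk.symm
    exact (hK _ (by lia) (by lia)).eq_of_tgt _ _
  let φ := HomologicalComplex.mkHomFromDouble hi (by simp) e₀.hom e₁.hom comm hd
  have (k : ℤ) : IsIso (φ.f k) := by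
    by_cases h₀ : k = i₀
    · subst h₀
      rw [HomologicalComplex.mkHomFromDouble_f₀]
      infer_instance
    by_cases h₁ : k = i₀ + 1
    · subst h₁
      rw [HomologicalComplex.mkHomFromDouble_f₁]
      infer_instance
    exact (HomologicalComplex.isZero_double_X f hi k h₀ h₁).isIso (hK k h₀ h₁) _
  have := HomologicalComplex.Hom.isIso_of_components φ
  exact ⟨asIso φ⟩

lemma twoComplex_d_self (n : ℤ) {P Q : A} (f : P ⟶ Q) :
    (twoComplex n f).d n (n + 1) =
      eqToHom (by simp [twoComplex]) ≫ f ≫ eqToHom (by simp [twoComplex]) :=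
  dif_pos ⟨rfl, rfl⟩

lemma nonempty_double_iso_twoComplex {P Q : A} (f : P ⟶ Q) {n m : ℤ}
    (hnm : (ComplexShape.up ℤ).Rel n m) :
    Nonempty (HomologicalComplex.double f hnm ≅ twoComplex n f) := by
  obtain rfl : m = n + 1 := hnm.symm
  refine nonempty_double_iso hnm (eqToIso (by simp [twoComplex])) (eqToIso (by simp [twoComplex]))
    (by simp [twoComplex_d_self]) fun k h₀ h₁ => ?_
  simpa [twoComplex, h₀, h₁] using isZero_zero A

variable [HasFiniteBiproducts A]

lemma nonempty_double_iso_mappingCone {P Q : A} (s : P ⟶ Q)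
    (h : (ComplexShape.up ℤ).Rel (-1) 0) :
    Nonempty (HomologicalComplex.double s h ≅
      mappingCone ((HomologicalComplex.single A (ComplexShape.up ℤ) 0).map s)) := by
  have hsingle (X : A) {i : ℤ} (hi : i ≠ 0) :=
    HomologicalComplex.isZero_single_obj_X (ComplexShape.up ℤ) 0 X i hi
  let eX (X : A) := HomologicalComplex.singleObjXSelf (ComplexShape.up ℤ) 0 X
  set φ := (HomologicalComplex.single A (ComplexShape.up ℤ) 0).map s with hφ
  have : IsIso ((mappingCone.inl φ).v 0 (-1) (zero_add _)) :=
    isIso_mappingCone_inl_v φ _ (hsingle Q (by simp))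
  have : IsIso ((mappingCone.inr φ).f 0) := isIso_mappingCone_inr_f φ (hsingle P (by simp))
  have hd : (mappingCone.inl φ).v 0 (-1) (zero_add _) ≫ (mappingCone φ).d (-1) 0 =
      φ.f 0 ≫ (mappingCone.inr φ).f 0 := by
    simp [mappingCone.inl_v_d φ 0 (-1) 1]
  refine nonempty_double_iso h ((eX P).symm ≪≫ asIso ((mappingCone.inl φ).v 0 (-1) (zero_add _)))
    ((eX Q).symm ≪≫ asIso ((mappingCone.inr φ).f 0)) ?_ fun k h₁ h₀ => ?_
  · simp [eX, hd, hφ, HomologicalComplex.single_map_f_self]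
  · exact (mappingCone.isZero_X_iff φ k).2 ⟨hsingle P (by lia), hsingle Q h₀⟩

end MappingCone

section HomotopyCategory

variable {A : Type u} [Category.{v} A] [Preadditive A] [HasZeroObject A]

lemma isPresilting_iotaA : IsPresilting (iotaA (A := A)) := by
  intro P Q n hn f
  let e := (homotopyQ (A := A)).commShiftIso n |>.app
    ((HomologicalComplex.single A (ComplexShape.up ℤ) 0).obj Q)
  obtain ⟨g, hg⟩ := homotopyQ.map_surjective (f ≫ e.inv)
  have hg₀ : g = 0 := by
    ext
    exact (HomologicalComplex.isZero_single_obj_X (ComplexShape.up ℤ) 0 Q (0 + n)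
      (by lia)).eq_of_tgt _ _
  rw [← cancel_mono e.inv, ← hg, hg₀, Functor.map_zero, zero_comp]

variable [HasFiniteBiproducts A]

lemma exists_distTriang_twoComplex {P Q : A} (s : P ⟶ Q) :
    ∃ (j : iotaA.obj Q ⟶ homotopyQ.obj (twoComplex (-1) s))
      (q : homotopyQ.obj (twoComplex (-1) s) ⟶ (iotaA.obj P)⟦(1 : ℤ)⟧),
      Triangle.mk (iotaA.map s) j q ∈ distTriang (HomotopyCategory A (ComplexShape.up ℤ)) := by
  obtain ⟨e⟩ := nonempty_double_iso_mappingCone s (by simp)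
  obtain ⟨e'⟩ := nonempty_double_iso_twoComplex s (n := -1) (m := 0) (by simp)
  let T := CochainComplex.mappingCone.triangleh
    ((HomologicalComplex.single A (ComplexShape.up ℤ) 0).map s)
  let ε : T.obj₃ ≅ homotopyQ.obj (twoComplex (-1) s) := homotopyQ.mapIso (e.symm ≪≫ e')
  refine ⟨T.mor₂ ≫ ε.hom, ε.inv ≫ T.mor₃, isomorphic_distinguished _
    (HomotopyCategory.mappingCone_triangleh_distinguished _) _
    (Triangle.isoMk _ _ (Iso.refl _) (Iso.refl _) ε.symm ?_ ?_ ?_)⟩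
  · exact (Category.comp_id _).trans (Category.id_comp _).symm
  · change (T.mor₂ ≫ ε.hom) ≫ ε.inv = 𝟙 _ ≫ T.mor₂
    simp
  · change (ε.inv ≫ T.mor₃) ≫ (𝟙 T.obj₁)⟦(1 : ℤ)⟧' = ε.inv ≫ T.mor₃
    simp

lemma trW_iotaA_map_iff (B : Set (HomotopyCategory A (ComplexShape.up ℤ))) {P Q : A} (s : P ⟶ Q) :
    (genSubcat B).trW (iotaA.map s) ↔ genSub B (homotopyQ.obj (twoComplex (-1) s)) := by
  obtain ⟨j, q, hT⟩ := exists_distTriang_twoComplex s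
  exact (genSubcat B).trW_iff_of_distinguished _ hT

lemma isTwoTerm_of_mem_coneSet {S : MorphismProperty A} {X : HomotopyCategory A (ComplexShape.up ℤ)}
    (hX : X ∈ coneSet S) : IsTwoTerm iotaA X := by
  obtain ⟨P, Q, s, -, rfl⟩ := hX
  exact ⟨P, Q, s, exists_distTriang_twoComplex s⟩

end HomotopyCategory

/-- Proposition: every morphism `f : A₀ ⟶ A'` of `K^b(A)/𝔻` between objects of `A` can
be presented as `g ∘ s⁻¹ ∘ i`, where `i : A₀ ⟶ A₀ ⊕ T` is the canonical coretraction,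
`g, s` are morphisms of `A`, and the cone of `s` is an object of `𝔻`. -/
theorem statement10 {A : Type u} [Category.{v} A] [Preadditive A] [HasZeroObject A]
    [HasFiniteBiproducts A] (S : MorphismProperty A) (A₀ A' : A)
    (f : (uBig S).obj A₀ ⟶ (uBig S).obj A') :
    ∃ (A'' T : A) (g : A'' ⟶ A') (s : A'' ⟶ A₀ ⊞ T),
      genSub (coneSet S) (homotopyQ.obj (twoComplex (-1) s)) ∧
      IsIso ((uBig S).map s) ∧
      ∃ e : (uBig S).obj (A₀ ⊞ T) ⟶ (uBig S).obj A',
        (uBig S).map s ≫ e = (uBig S).map g ∧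
        f = (uBig S).map (biprod.inl : A₀ ⟶ A₀ ⊞ T) ≫ e := by
  obtain ⟨A'', T, g, s, hs, he⟩ := statement10_general isPresilting_iotaA
    (fun _ => isTwoTerm_of_mem_coneSet (S := S)) (locQ S) f
  exact ⟨A'', T, g, s, (trW_iotaA_map_iff _ s).1 hs, Localization.inverts (locQ S) _ _ hs, he⟩
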